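/- Let V and H be finite-dimensional complex vector spaces with dim V = q, let ψ : ⋀²V → H be a linear map, and let k ≥ 1 be an integer with 2k ≤ q. Suppose that every non-zero element of the kernel of ψ has rank bigger than 2k. Then for every integer r with 1 ≤ r ≤ k one has dim H ≥ 2rq − (2r+1 choose 2). -/

import Mathlib

open Module ExteriorAlgebra

/-- The wedge product of two vectors, as an element of the second exterior power `⋀²V`. -/
noncomputable def wedge {V : Type*} [AddCommGroup V] [Module ℂ V] (x y : V) : ⋀[ℂ]^2 V :=
  ⟨ExteriorAlgebra.ι ℂ x * ExteriorAlgebra.ι ℂ y, by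
    rw [show (⋀[ℂ]^2 V : Submodule ℂ (ExteriorAlgebra ℂ V))
        = (LinearMap.range (ExteriorAlgebra.ι ℂ : V →ₗ[ℂ] ExteriorAlgebra ℂ V)) ^ 2 from rfl,
      pow_two]
    exact Submodule.mul_mem_mul (LinearMap.mem_range_self _ x) (LinearMap.mem_range_self _ y)⟩

section ProjectiveElimination

open MvPolynomial

attribute [local instance] MvPolynomial.gradedAlgebra

lemma MvPolynomial.homogeneousComponent_mul_of_isHomogeneous {σ R : Type*} [CommSemiring R]
    {p l : MvPolynomial σ R} {j : ℕ} (hl : l.IsHomogeneous j) (n : ℕ) :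
    homogeneousComponent (n + j) (p * l) = homogeneousComponent n p * l := by
  have h := DirectSum.coe_decompose_mul_add_of_right_mem (homogeneousSubmodule σ R)
    (a := p) (i := n) ((mem_homogeneousSubmodule j l).2 hl)
  rwa [← decomposition.decompose'_apply, ← decomposition.decompose'_apply]

/-- If homogeneous polynomials have only the origin as a common zero, then all forms of large
degree lie in the ideal they generate. -/
lemma exists_forall_isHomogeneous_mem_span {K σ : Type*} [Field K] [IsAlgClosed K] [Finite σ]
    (S : Set (MvPolynomial σ K)) (hS : ∀ x : σ → K, (∀ g ∈ S, eval x g = 0) → x = 0) :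
    ∃ D : ℕ, ∀ n, D ≤ n → ∀ p : MvPolynomial σ K, p.IsHomogeneous n → p ∈ Ideal.span S := by
  have hrad : idealOfVars σ K ≤ (Ideal.span S).radical := by
    rw [← vanishingIdeal_zeroLocus_eq_radical (K := K), idealOfVars, Ideal.span_le]
    rintro _ ⟨i, rfl⟩
    rw [SetLike.mem_coe, mem_vanishingIdeal_iff]
    intro x hx
    have hx0 : x = 0 := hS x fun g hg => by
      simpa [coe_aeval_eq_eval] using mem_zeroLocus_iff.1 hx g (Ideal.subset_span hg)
    simp [hx0]
  obtain ⟨D, hD⟩ := (Ideal.span S).exists_radical_pow_le_of_fg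
    (IsNoetherian.noetherian (Ideal.span S).radical)
  refine ⟨D, fun n hn p hp => hD (Ideal.pow_right_mono hrad D ?_)⟩
  rw [mem_pow_idealOfVars_iff']
  intro d hd
  exact hp.coeff_eq_zero (by omega)

/-- If the linear forms `l i` have only the origin as a common zero on the cone cut out by `G`,
then the coordinate functions of the cone are integral over the algebra generated by the `l i`. -/
lemma isIntegral_adjoin_linearForms {K σ ι F : Type*} [Field K] [IsAlgClosed K] [Finite σ]
    [Finite ι] [Field F] [Algebra K F] (φ : MvPolynomial σ K →ₐ[K] F)
    (G : Set (MvPolynomial σ K)) (hG : ∀ g ∈ G, ∃ n, g.IsHomogeneous n)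
    (hφ : ∀ g ∈ G, φ g = 0) (l : ι → MvPolynomial σ K) (hl : ∀ i, (l i).IsHomogeneous 1)
    (hzero : ∀ x : σ → K, (∀ g ∈ G, eval x g = 0) → (∀ i, eval x (l i) = 0) → x = 0) (s : σ) :
    IsIntegral (Algebra.adjoin K (Set.range fun i => φ (l i))) (φ (X s)) := by
  classical
  have := Fintype.ofFinite ι
  set B := Algebra.adjoin K (Set.range fun i => φ (l i))
  obtain ⟨D, hD⟩ := exists_forall_isHomogeneous_mem_span (G ∪ Set.range l) fun x hx =>
    hzero x (fun g hg => hx g (.inl hg)) fun i => hx _ (.inr ⟨i, rfl⟩)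
  let N : Submodule B F :=
    Submodule.span B ((fun d => φ (monomial d 1)) '' {d : σ →₀ ℕ | d.degree ≤ D})
  have hGhom : (Ideal.span G).IsHomogeneous (homogeneousSubmodule σ K) :=
    Ideal.homogeneous_span _ _ fun g hg => hG g hg
  have hGker : Ideal.span G ≤ RingHom.ker φ := Ideal.span_le.2 hφ
  have hlow : ∀ n ≤ D, ∀ p : MvPolynomial σ K, p.IsHomogeneous n → φ p ∈ N := by
    intro n hn p hp
    rw [p.as_sum, map_sum]
    refine Submodule.sum_mem _ fun d hd => ?_
    have hdeg : d.degree = n := by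
      by_contra h
      exact mem_support_iff.1 hd (hp.coeff_eq_zero h)
    have h1 : φ (monomial d (coeff d p)) = algebraMap K B (coeff d p) • φ (monomial d 1) := by
      rw [algebraMap_smul, ← map_smul, smul_monomial, smul_eq_mul, mul_one]
    rw [h1]
    exact N.smul_mem _ (Submodule.subset_span ⟨d, by simp [hdeg, hn], rfl⟩)
  have hall : ∀ n, ∀ p : MvPolynomial σ K, p.IsHomogeneous n → φ p ∈ N := by
    intro n
    induction n with
    | zero => exact hlow 0 (Nat.zero_le _)
    | succ n ih =>
      intro p hp
      rcases le_or_gt (n + 1) D with hn | hn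
      · exact hlow _ hn p hp
      have hmem := hD (n + 1) hn.le p hp
      rw [Ideal.span_union] at hmem
      obtain ⟨a, ha, b, hb, rfl⟩ := Submodule.mem_sup.1 hmem
      obtain ⟨c, rfl⟩ := (Ideal.mem_span_range_iff_exists_fun).1 hb
      have ha' : φ (homogeneousComponent (n + 1) a) = 0 :=
        hGker (homogeneousComponent_mem_of_mem hGhom ha _)
      rw [← homogeneousComponent_eq_self hp, map_add, map_add, ha', zero_add, map_sum, map_sum]
      refine Submodule.sum_mem _ fun i _ => ?_
      rw [homogeneousComponent_mul_of_isHomogeneous (hl i), map_mul, mul_comm]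
      exact N.smul_mem (⟨φ (l i), Algebra.subset_adjoin ⟨i, rfl⟩⟩ : B)
        (ih _ (homogeneousComponent_isHomogeneous n (c i)))
  refine isIntegral_of_smul_mem_submodule N ?_ ?_ (φ (X s)) ?_
  · intro hbot
    have h1 : φ 1 ∈ N := hlow 0 (Nat.zero_le _) 1 (isHomogeneous_one σ K)
    rw [hbot] at h1
    simp at h1
  · exact Submodule.fg_span ((Finsupp.finite_of_degree_le D).image _)
  · intro y hy
    induction hy using Submodule.span_induction with
    | mem y hy =>
      obtain ⟨d, -, rfl⟩ := hy
      rw [smul_eq_mul, ← map_mul]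
      exact hall _ _ ((isHomogeneous_X K s).mul (isHomogeneous_monomial 1 rfl))
    | zero => simp
    | add y z _ _ hy hz => rw [smul_add]; exact N.add_mem hy hz
    | smul b y _ hy => rw [smul_comm]; exact N.smul_mem b hy

open Cardinal in
/-- If the linear forms `l i` have only the origin as a common zero on the cone cut out by `G`,
and the generic point `z` of some subvariety of that cone has algebraically independent
coordinates `z (e t)`, then there are at least as many forms as such coordinates. -/
lemma card_le_card_linearForms {K : Type} {σ τ ι : Type} [Field K] [IsAlgClosed K] [Finite σ]
    [Fintype τ] [Fintype ι] (G : Set (MvPolynomial σ K)) (hG : ∀ g ∈ G, ∃ n, g.IsHomogeneous n)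
    (l : ι → MvPolynomial σ K) (hl : ∀ i, (l i).IsHomogeneous 1)
    (hzero : ∀ x : σ → K, (∀ g ∈ G, eval x g = 0) → (∀ i, eval x (l i) = 0) → x = 0)
    (z : σ → FractionRing (MvPolynomial τ K)) (hz : ∀ g ∈ G, aeval z g = 0) (e : τ → σ)
    (he : ∀ t, z (e t) = algebraMap _ _ (X t : MvPolynomial τ K)) :
    Fintype.card τ ≤ Fintype.card ι := by
  let P := MvPolynomial τ K
  let F := FractionRing P
  let φ : MvPolynomial σ K →ₐ[K] F := aeval z
  let B := Algebra.adjoin K (Set.range fun i => φ (l i))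
  have hX : ∀ t, IsAlgebraic B (algebraMap P F (X t)) := fun t => by
    have h := (isIntegral_adjoin_linearForms φ G hG hz l hl hzero (e t)).isAlgebraic
    rwa [aeval_X, he] at h
  have hP : ∀ p : P, IsAlgebraic B (algebraMap P F p) := fun p => by
    induction p using MvPolynomial.induction_on with
    | C a =>
      have : algebraMap P F (C a) = algebraMap B F (algebraMap K B a) := by
        rw [← IsScalarTower.algebraMap_apply K B F, ← MvPolynomial.algebraMap_eq,
          ← IsScalarTower.algebraMap_apply K P F]
      rw [this]
      exact isAlgebraic_algebraMap _
    | add p q hp hq => rw [map_add]; exact hp.add hq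
    | mul_X p i hp => rw [map_mul]; exact hp.mul (hX i)
  have hF : Algebra.IsAlgebraic B F := ⟨fun x => by
    obtain ⟨a, b, -, rfl⟩ := IsFractionRing.div_surjective (A := P) x
    rw [div_eq_mul_inv]
    exact (hP a).mul (hP b).inv⟩
  have hle := Algebra.IsAlgebraic.trdeg_le_cardinalMk K (Set.range fun i => φ (l i))
  have hge : Algebra.trdeg K P ≤ Algebra.trdeg K F :=
    trdeg_le_of_injective (IsScalarTower.toAlgHom K P F) (IsFractionRing.injective P F)
  have := (MvPolynomial.trdeg_of_isDomain (S := K) (ι := τ)).symm.le.trans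
    ((hge.trans hle).trans mk_range_le)
  simpa using this

end ProjectiveElimination

section SkewMatrix

open Matrix

lemma Matrix.exists_linearIndependent_col_of_le_rank {K m n : Type*} [Field K] [Finite m]
    [Fintype n] (A : Matrix m n K) {r : ℕ} (hr : r ≤ A.rank) :
    ∃ g : Fin r → n, LinearIndependent K fun j => A.col (g j) := by
  rw [rank_eq_finrank_span_cols] at hr
  obtain ⟨f, hf, -, hli⟩ := Submodule.exists_fun_fin_finrank_span_eq K (Set.range A.col)
  choose g hg using hf
  refine ⟨fun j => g (Fin.castLE hr j), ?_⟩
  simp_rw [hg]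
  exact hli.comp _ (Fin.castLE_injective hr)

/-- A matrix of rank at least `r` has a non-vanishing minor of size `r`. -/
lemma Matrix.exists_submatrix_det_ne_zero_of_le_rank {K m n : Type*} [Field K] [Fintype m]
    [Fintype n] (A : Matrix m n K) {r : ℕ} (hr : r ≤ A.rank) :
    ∃ (f : Fin r → m) (g : Fin r → n), (A.submatrix f g).det ≠ 0 := by
  obtain ⟨g, hg⟩ := A.exists_linearIndependent_col_of_le_rank hr
  have hrank : ((A.submatrix id g)ᵀ).rank = r := by
    simpa using LinearIndependent.rank_matrix (M := (A.submatrix id g)ᵀ) hg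
  obtain ⟨f, hf⟩ := (A.submatrix id g)ᵀ.exists_linearIndependent_col_of_le_rank hrank.ge
  refine ⟨f, g, ?_⟩
  have hrows : LinearIndependent K (A.submatrix f g).row := hf
  rw [linearIndependent_rows_iff_isUnit, isUnit_iff_isUnit_det] at hrows
  exact hrows.ne_zero

lemma LinearMap.finrank_map_add_two_le {K E E' : Type*} [Field K] [AddCommGroup E] [Module K E]
    [AddCommGroup E'] [Module K E'] (L : E →ₗ[K] E') {U : Submodule K E} [FiniteDimensional K U]
    {u v : E} (hu : u ∈ U) (hv : v ∈ U) (hLu : L u = 0) (hLv : L v = 0)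
    (huv : LinearIndependent K ![u, v]) : finrank K (U.map L) + 2 ≤ finrank K U := by
  have hli : LinearIndependent K ![(⟨⟨u, hu⟩, hLu⟩ : LinearMap.ker (L.domRestrict U)),
      ⟨⟨v, hv⟩, hLv⟩] := by
    refine LinearIndependent.of_comp (U.subtype ∘ₗ Submodule.subtype _) ?_
    convert huv using 1
    ext i
    fin_cases i <;> rfl
  have hcard := hli.fintype_card_le_finrank
  have hsum := LinearMap.finrank_range_add_finrank_ker (L.domRestrict U)
  rw [Fintype.card_fin] at hcard
  rw [LinearMap.range_domRestrict] at hsum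
  omega

/-- Eliminating a hyperbolic plane from a skew-symmetric matrix lowers its rank by two. -/
lemma Matrix.rank_eliminate_add_two_le {K n : Type*} [Field K] [CharZero K] [Fintype n]
    (S : Matrix n n K) (hS : ∀ c d, S d c = -S c d) {a b : n} (hab : S a b ≠ 0) :
    (of fun c d => S c d - (S a b)⁻¹ * (S a c * S b d - S b c * S a d)).rank + 2 ≤ S.rank := by
  classical
  have hdiag : ∀ c, S c c = 0 := fun c => self_eq_neg.1 (hS c c)
  have hba : S b a = -S a b := hS a b
  let L : (n → K) →ₗ[K] (n → K) := LinearMap.id -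
    (S a b)⁻¹ • ((LinearMap.proj b).smulRight (S.row a) - (LinearMap.proj a).smulRight (S.row b))
  have hL : ∀ w c, L w c = w c - (S a b)⁻¹ * (w b * S a c - w a * S b c) := fun w c => rfl
  set T : Matrix n n K := of fun c d => S c d - (S a b)⁻¹ * (S a c * S b d - S b c * S a d)
  have hT : T.mulVecLin = L ∘ₗ S.mulVecLin := by
    ext d c
    simp only [LinearMap.comp_apply, LinearMap.single_apply, mulVecLin_apply, mulVec_single_one,
      hL, T, col_apply, of_apply]
    ring
  have hmem : ∀ c, S.row c ∈ LinearMap.range S.mulVecLin := fun c => by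
    refine ⟨-Pi.single c 1, ?_⟩
    ext d
    simp [hS c d, mulVec_neg]
  have hker : ∀ c, c = a ∨ c = b → L (S.row c) = 0 := by
    rintro c (rfl | rfl)
    all_goals
      ext d
      simp only [hL, row_apply, hdiag, hba, Pi.zero_apply]
      field_simp
      ring
  have hli : LinearIndependent K ![S.row a, S.row b] := by
    refine LinearIndependent.pair_iff.2 fun s t hst => ?_
    have h1 := congrFun hst a
    have h2 := congrFun hst b
    simp only [Pi.add_apply, Pi.smul_apply, smul_eq_mul, row_apply, hdiag, hba] at h1 h2
    exact ⟨by simpa [hab] using h2, by simpa [hab] using h1⟩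
  rw [rank, rank, hT, LinearMap.range_comp]
  exact L.finrank_map_add_two_le (hmem a) (hmem b) (hker a (.inl rfl)) (hker b (.inr rfl)) hli

/-- A skew-symmetric matrix of rank at most `2k` is a sum of `k` skew-symmetric matrices of
rank at most two. -/
lemma Matrix.exists_sum_of_skew_of_rank_le {K n : Type*} [Field K] [CharZero K] [Fintype n]
    (k : ℕ) (S : Matrix n n K) (hS : ∀ c d, S d c = -S c d) (hrank : S.rank ≤ 2 * k) :
    ∃ x y : Fin k → n → K, ∀ c d, S c d = ∑ i, (x i c * y i d - y i c * x i d) := by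
  induction k generalizing S with
  | zero =>
    have h0 : S = 0 := by
      have h : S.rank = 0 := by omega
      rw [rank, Submodule.finrank_eq_zero, LinearMap.range_eq_bot] at h
      classical
      ext c d
      simpa using congrFun (LinearMap.congr_fun h (Pi.single d 1)) c
    exact ⟨0, 0, by simp [h0]⟩
  | succ k ih =>
    by_cases h0 : S = 0
    · exact ⟨0, 0, by simp [h0]⟩
    obtain ⟨a, b, hab⟩ : ∃ a b, S a b ≠ 0 := by
      by_contra! h
      exact h0 (Matrix.ext h)
    have hle := S.rank_eliminate_add_two_le hS hab
    obtain ⟨x, y, hxy⟩ := ih (of fun c d => S c d - (S a b)⁻¹ * (S a c * S b d - S b c * S a d))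
      (fun c d => by simp only [of_apply, hS c d]; ring) (by omega)
    refine ⟨Fin.cons ((S a b)⁻¹ • S a) x, Fin.cons (S b) y, fun c d => ?_⟩
    rw [Fin.sum_univ_succ]
    simp only [Fin.cons_zero, Fin.cons_succ, ← hxy, of_apply, Pi.smul_apply, smul_eq_mul]
    ring

/-- Over a field, an invertible skew-symmetric block `A` and a block `Y` to its right extend to a
skew-symmetric matrix whose rank is at most the size of `A`. -/
lemma Matrix.exists_skew_extension {K p m : Type*} [Field K] [Fintype p] [DecidableEq p]
    [Fintype m] (A : Matrix p p K) (Y : Matrix p m K) (hA : Aᵀ = -A) (hdet : A.det ≠ 0) :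
    ∃ W : Matrix (p ⊕ m) (p ⊕ m) K, Wᵀ = -W ∧ W.rank ≤ Fintype.card p ∧
      (∀ a b, W (.inl a) (.inl b) = A a b) ∧ ∀ a c, W (.inl a) (.inr c) = Y a c := by
  let M := fromCols A Y
  have hunit : IsUnit A.det := hdet.isUnit
  have htop : A * (A⁻¹ * M) = M := by rw [← Matrix.mul_assoc, mul_nonsing_inv _ hunit, Matrix.one_mul]
  have hrow : ∀ a j, (-(Mᵀ * (A⁻¹ * M))) (.inl a) j = M a j := fun a j => by
    conv_rhs => rw [← htop]
    have h : ∀ b, A b a = -A a b := fun b => congrFun (congrFun hA a) b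
    rw [Matrix.neg_apply, mul_apply, mul_apply, ← Finset.sum_neg_distrib]
    refine Finset.sum_congr rfl fun b _ => ?_
    rw [show Mᵀ (.inl a) b = -A a b from h b, neg_mul, neg_neg]
  refine ⟨-(Mᵀ * (A⁻¹ * M)), ?_, ?_, fun a b => hrow a _, fun a c => hrow a _⟩
  · have hinv : A⁻¹ᵀ = -A⁻¹ := by
      rw [transpose_nonsing_inv, hA]
      exact inv_eq_left_inv (by rw [neg_mul_neg, nonsing_inv_mul _ hunit])
    rw [transpose_neg, transpose_mul, transpose_mul, transpose_transpose, hinv, Matrix.mul_neg, Matrix.neg_mul,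
      Matrix.mul_assoc]
  · rw [← Matrix.neg_mul]
    exact (rank_mul_le_right _ _).trans (rank_le_card_height _)

end SkewMatrix

section SkewRankLocus

open Matrix MvPolynomial

/-- There are invertible skew-symmetric matrices of every even size. -/
lemma Matrix.exists_skew_det_ne_zero (r : ℕ) :
    ∃ S : Matrix (Fin (2 * r)) (Fin (2 * r)) ℂ, (∀ a b, S b a = -S a b) ∧ S.det ≠ 0 := by
  let e : Fin (2 * r) ≃ Fin r ⊕ Fin r := (finCongr (two_mul r)).trans finSumFinEquiv.symm
  refine ⟨(Matrix.J (Fin r) ℂ).submatrix e e, fun a b => ?_, ?_⟩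
  · exact congrFun (congrFun (J_transpose (Fin r) ℂ) (e a)) (e b)
  · rw [det_submatrix_equiv_self]
    exact (isUnit_det_J (Fin r) ℂ).ne_zero

/-- Indices of the entries of a skew-symmetric matrix of rank at most `2r` and size `2r + m` which
can be chosen generically. -/
abbrev FreeEntry (r m : ℕ) : Type :=
  {p : Fin (2 * r) × Fin (2 * r) // p.1 < p.2} ⊕ (Fin (2 * r) × Fin m)

lemma card_freeEntry (r m : ℕ) :
    Fintype.card (FreeEntry r m) = (2 * r).choose 2 + 2 * r * m := by
  have h : Fintype.card {p : Fin (2 * r) × Fin (2 * r) // p.1 < p.2} = (2 * r).choose 2 := by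
    let e : {p : Fin (2 * r) × Fin (2 * r) // p.1 < p.2} ≃ Σ b : Fin (2 * r), Fin b :=
      { toFun := fun p => ⟨p.1.2, p.1.1, p.2⟩
        invFun := fun p => ⟨(⟨p.2, p.2.2.trans p.1.2⟩, p.1), p.2.2⟩
        left_inv := fun _ => rfl
        right_inv := fun _ => rfl }
    rw [Fintype.card_congr e, Fintype.card_sigma]
    simp [Fin.sum_univ_eq_sum_range fun i => i, Finset.sum_range_id, Nat.choose_two_right]
  simp [h]

/-- The position of a free entry in the matrix. -/
def FreeEntry.pos {r m : ℕ} :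
    FreeEntry r m → (Fin (2 * r) ⊕ Fin m) × (Fin (2 * r) ⊕ Fin m)
  | .inl p => (.inl p.1.1, .inl p.1.2)
  | .inr p => (.inl p.1, .inr p.2)

/-- The generic skew-symmetric matrix of size `2r`. -/
noncomputable def genericSkew (r m : ℕ) :
    Matrix (Fin (2 * r)) (Fin (2 * r)) (MvPolynomial (FreeEntry r m) ℂ) :=
  of fun a b => if h : a < b then X (.inl ⟨(a, b), h⟩)
    else if h : b < a then -X (.inl ⟨(b, a), h⟩) else 0

lemma genericSkew_skew (r m : ℕ) (a b : Fin (2 * r)) :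
    genericSkew r m b a = -genericSkew r m a b := by
  rcases lt_trichotomy a b with h | rfl | h
  · simp [genericSkew, h, h.not_gt]
  · simp [genericSkew]
  · simp [genericSkew, h, h.not_gt]

lemma det_genericSkew_ne_zero (r m : ℕ) : (genericSkew r m).det ≠ 0 := by
  obtain ⟨S, hS, hdet⟩ := Matrix.exists_skew_det_ne_zero r
  let f : MvPolynomial (FreeEntry r m) ℂ →+* ℂ := eval (Sum.elim (fun p => S p.1.1 p.1.2) 0)
  intro h
  apply hdet
  rw [← map_zero f, ← h, f.map_det]
  congr 1
  ext a b
  rw [RingHom.mapMatrix_apply, Matrix.map_apply]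
  rcases lt_trichotomy a b with h | rfl | h
  · simp [f, genericSkew, h]
  · simp [f, genericSkew, self_eq_neg.1 (hS a a)]
  · simp [f, genericSkew, h, h.not_gt, hS b a]

/-- The generic skew-symmetric matrix of rank at most `2r` and size `2r + m`. -/
lemma exists_generic_point (r m : ℕ) :
    ∃ W : Matrix (Fin (2 * r) ⊕ Fin m) (Fin (2 * r) ⊕ Fin m)
        (FractionRing (MvPolynomial (FreeEntry r m) ℂ)),
      Wᵀ = -W ∧ W.rank ≤ 2 * r ∧
        ∀ t : FreeEntry r m, W t.pos.1 t.pos.2 = algebraMap _ _ (X t : MvPolynomial _ ℂ) := by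
  let ρ := algebraMap (MvPolynomial (FreeEntry r m) ℂ)
    (FractionRing (MvPolynomial (FreeEntry r m) ℂ))
  obtain ⟨W, hW, hrank, hl, hr⟩ := Matrix.exists_skew_extension
    (ρ.mapMatrix (genericSkew r m)) (of fun a (c : Fin m) => ρ (X (.inr (a, c))))
    (by
      ext a b
      simp [genericSkew_skew r m a b])
    (by
      rw [← RingHom.map_det, Ne, IsFractionRing.to_map_eq_zero_iff]
      exact det_genericSkew_ne_zero r m)
  refine ⟨W, hW, by simpa using hrank, ?_⟩
  rintro (⟨⟨a, b⟩, hab⟩ | ⟨a, c⟩)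
  · have hab' : a < b := hab
    simp [FreeEntry.pos, hl, genericSkew, hab', ρ]
  · simp [FreeEntry.pos, hr, ρ]

/-- The equations of the cone of skew-symmetric matrices of rank at most `2r`. -/
def skewRankEquations (n : Type) (r : ℕ) : Set (MvPolynomial (n × n) ℂ) :=
  Set.range (fun p : n × n => X (p.1, p.2) + X (p.2, p.1)) ∪
    Set.range (fun p : (Fin (2 * r + 1) → n) × (Fin (2 * r + 1) → n) =>
      (of fun i j => (X (p.1 i, p.2 j) : MvPolynomial (n × n) ℂ)).det)

lemma isHomogeneous_of_mem_skewRankEquations {n : Type} {r : ℕ} :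
    ∀ g ∈ skewRankEquations n r, ∃ d, g.IsHomogeneous d := by
  rintro _ (⟨p, rfl⟩ | ⟨p, rfl⟩)
  · exact ⟨1, (isHomogeneous_X _ _).add (isHomogeneous_X _ _)⟩
  · refine ⟨∑ _i : Fin (2 * r + 1), 1, ?_⟩
    simp only [det_apply]
    refine IsHomogeneous.sum _ _ _ fun τ _ => ?_
    rw [← mem_homogeneousSubmodule]
    exact zsmul_mem (IsHomogeneous.prod _ _ _ fun i _ => isHomogeneous_X _ _) _

lemma aeval_eq_zero_of_mem_skewRankEquations {n F : Type} [Fintype n] [Field F] [Algebra ℂ F]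
    {r : ℕ} (W : Matrix n n F) (hW : Wᵀ = -W) (hrank : W.rank ≤ 2 * r) :
    ∀ g ∈ skewRankEquations n r, aeval (fun p : n × n => W p.1 p.2) g = 0 := by
  rintro _ (⟨p, rfl⟩ | ⟨p, rfl⟩)
  · have h : W p.2 p.1 = -W p.1 p.2 := congrFun (congrFun hW p.1) p.2
    simp [h]
  · rw [AlgHom.map_det]
    by_contra h
    have h1 := rank_of_det_ne_zero h
    have h2 := rank_submatrix_le W p.1 p.2
    have h3 : (aeval fun p : n × n => W p.1 p.2).mapMatrix
        (of fun i j => (X (p.1 i, p.2 j) : MvPolynomial (n × n) ℂ)) = W.submatrix p.1 p.2 := by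
      ext i j
      simp
    rw [h3, Fintype.card_fin] at h1
    omega

lemma exists_sum_of_skewRankEquations {n : Type} [Fintype n] {r : ℕ} (x : n × n → ℂ)
    (hx : ∀ g ∈ skewRankEquations n r, eval x g = 0) :
    (∀ c d, x (d, c) = -x (c, d)) ∧
      ∃ u v : Fin r → n → ℂ, ∀ c d, x (c, d) = ∑ i, (u i c * v i d - v i c * u i d) := by
  have hskew : ∀ c d, x (d, c) = -x (c, d) := fun c d => by
    have h := hx _ (.inl ⟨(c, d), rfl⟩)
    simp only [map_add, eval_X] at h
    exact eq_neg_of_add_eq_zero_right h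
  refine ⟨hskew, Matrix.exists_sum_of_skew_of_rank_le r (of fun c d => x (c, d)) hskew ?_⟩
  by_contra! hlt
  obtain ⟨f, g, hfg⟩ := Matrix.exists_submatrix_det_ne_zero_of_le_rank _ (Nat.succ_le_of_lt hlt)
  apply hfg
  have h := hx _ (.inr ⟨(f, g), rfl⟩)
  rw [RingHom.map_det] at h
  rw [← h]
  congr 1
  ext i j
  simp

/-- Linear forms whose only common zero among the skew-symmetric matrices of rank at most `2r`
is the origin are at least as many as the dimension of that cone. -/
lemma card_linearForms_of_skewRank {ι : Type} [Fintype ι] (r m : ℕ)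
    (c : ι → (Fin (2 * r) ⊕ Fin m) × (Fin (2 * r) ⊕ Fin m) → ℂ)
    (hc : ∀ x : (Fin (2 * r) ⊕ Fin m) × (Fin (2 * r) ⊕ Fin m) → ℂ,
      (∀ a b, x (b, a) = -x (a, b)) →
      (∃ u v : Fin r → Fin (2 * r) ⊕ Fin m → ℂ,
        ∀ a b, x (a, b) = ∑ i, (u i a * v i b - v i a * u i b)) →
      (∀ i, ∑ p, c i p * x p = 0) → x = 0) :
    (2 * r).choose 2 + 2 * r * m ≤ Fintype.card ι := by
  obtain ⟨W, hW, hrank, hpos⟩ := exists_generic_point r m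
  rw [← card_freeEntry]
  refine card_le_card_linearForms (skewRankEquations _ r) isHomogeneous_of_mem_skewRankEquations
    (fun i => ∑ p, C (c i p) * X p)
    (fun i => IsHomogeneous.sum _ _ _ fun p _ => isHomogeneous_C_mul_X _ _) (fun x hx hl => ?_)
    (fun p => W p.1 p.2) (aeval_eq_zero_of_mem_skewRankEquations W hW hrank) FreeEntry.pos hpos
  obtain ⟨hskew, huv⟩ := exists_sum_of_skewRankEquations x hx
  exact hc x hskew huv fun i => by simpa using hl i

end SkewRankLocus

section Bivectors

variable {V : Type*} [AddCommGroup V] [Module ℂ V]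

lemma wedge_eq_ιMulti (x y : V) : wedge x y = exteriorPower.ιMulti ℂ 2 ![x, y] := by
  apply Subtype.ext
  simp [wedge, ExteriorAlgebra.ιMulti_apply]

lemma wedge_zero_left (y : V) : wedge 0 y = 0 := by
  apply Subtype.ext
  simp [wedge]

lemma sum_wedge_basis_eq {n : Type*} [Fintype n] (b : n → V) {r : ℕ} (x : n × n → ℂ)
    (u v : Fin r → n → ℂ) (huv : ∀ c d, x (c, d) = ∑ i, (u i c * v i d - v i c * u i d)) :
    ∑ p, x p • wedge (b p.1) (b p.2) =
      ∑ i, wedge ((2 : ℂ) • ∑ c, u i c • b c) (∑ d, v i d • b d) := by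
  apply Subtype.ext
  have hprod : ∀ f g : n → ℂ, ι ℂ (∑ c, f c • b c) * ι ℂ (∑ d, g d • b d) =
      ∑ c, ∑ d, (f c * g d) • (ι ℂ (b c) * ι ℂ (b d)) := fun f g => by
    simp only [map_sum, map_smul, Finset.sum_mul_sum, smul_mul_smul_comm]
  have hswap : ∀ y z : V, ι ℂ ((2 : ℂ) • y) * ι ℂ z = ι ℂ y * ι ℂ z - ι ℂ z * ι ℂ y := fun y z => by
    rw [map_smul, smul_mul_assoc, two_smul, eq_neg_of_add_eq_zero_right (ι_add_mul_swap y z)]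
    abel
  simp only [wedge, Submodule.coe_sum, Submodule.coe_smul, hswap, hprod, Fintype.sum_prod_type, huv]
  simp only [Finset.sum_smul, sub_smul, Finset.sum_sub_distrib]
  congr 1 <;>
    exact (Finset.sum_congr rfl fun c _ => Finset.sum_comm).trans Finset.sum_comm

lemma eq_zero_of_sum_wedge_basis_eq_zero {n : Type*} [Fintype n] (b : Basis n ℂ V)
    (x : n × n → ℂ) (hx : ∀ c d, x (d, c) = -x (c, d))
    (h : ∑ p, x p • wedge (b p.1) (b p.2) = 0) : x = 0 := by
  classical
  ext ⟨c, d⟩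
  have h' := congrArg (exteriorPower.pairingDual ℂ V 2
    (exteriorPower.ιMulti ℂ 2 ![b.coord c, b.coord d])) h
  simp [wedge_eq_ιMulti, exteriorPower.pairingDual_ιMulti_ιMulti, Matrix.det_fin_two,
    Finsupp.single_apply, Fintype.sum_prod_type] at h'
  simp only [mul_sub, mul_ite, mul_one, mul_zero, Finset.sum_sub_distrib, Finset.sum_ite_eq',
    Finset.mem_univ, if_true] at h'
  rw [hx c d, sub_neg_eq_add] at h'
  exact self_eq_neg.1 (eq_neg_of_add_eq_zero_left h')

end Bivectors

lemma choose_two_succ_add_choose_two (n : ℕ) : (n + 1).choose 2 + n.choose 2 = n * n := by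
  induction n with
  | zero => simp
  | succ n ih =>
    have h1 := Nat.choose_succ_succ' (n + 1) 1
    have h2 := Nat.choose_succ_succ' n 1
    rw [Nat.choose_one_right] at h1 h2
    linarith

/-- **Corollary 4.4** (linear-algebra content): if `ψ : ⋀²V → H` is a linear map of
finite-dimensional complex vector spaces, `dim V = q`, `1 ≤ k`, `2k ≤ q`, and no non-zero
element of `ker ψ` is a sum of at most `k` decomposable bivectors (i.e. every non-zero element
of `ker ψ` has rank bigger than `2k`), then `dim H ≥ 2rq - C(2r+1, 2)` for all `1 ≤ r ≤ k`. -/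
theorem stmt1 {V H : Type*} [AddCommGroup V] [Module ℂ V] [FiniteDimensional ℂ V]
    [AddCommGroup H] [Module ℂ H] [FiniteDimensional ℂ H]
    (q k : ℕ) (hq : Module.finrank ℂ V = q) (hk : 1 ≤ k) (hkq : 2 * k ≤ q)
    (ψ : (⋀[ℂ]^2 V) →ₗ[ℂ] H)
    (hker : ∀ v : ⋀[ℂ]^2 V, ψ v = 0 → v ≠ 0 →
      ¬ ∃ x y : Fin k → V, v = ∑ i, wedge (x i) (y i)) :
    ∀ r : ℕ, 1 ≤ r → r ≤ k →
      (2 * r * q : ℤ) - ((2 * r + 1).choose 2 : ℤ) ≤ (Module.finrank ℂ H : ℤ) := by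
  intro r _ hrk
  obtain ⟨m, hm⟩ := Nat.exists_eq_add_of_le (show 2 * r ≤ q by omega)
  obtain ⟨j, rfl⟩ := Nat.exists_eq_add_of_le hrk
  let b : Basis (Fin (2 * r) ⊕ Fin m) ℂ V :=
    (finBasisOfFinrankEq ℂ V (hq.trans hm)).reindex finSumFinEquiv.symm
  let β := finBasis ℂ H
  have hcard := card_linearForms_of_skewRank r m
    (fun i p => β.repr (ψ (wedge (b p.1) (b p.2))) i) (by
      rintro x hx ⟨u, v, huv⟩ hl
      have hsum := sum_wedge_basis_eq b x u v huv
      refine eq_zero_of_sum_wedge_basis_eq_zero b x hx (by_contra fun hne => ?_)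
      refine hker _ (β.repr.injective (Finsupp.ext fun i => ?_)) hne
        ⟨Fin.append (fun i => (2 : ℂ) • ∑ c, u i c • b c) 0,
          Fin.append (fun i => ∑ d, v i d • b d) 0, ?_⟩
      · simpa [mul_comm] using hl i
      · rw [hsum, Fin.sum_univ_add]
        simp [wedge_zero_left])
  rw [Fintype.card_fin] at hcard
  have hbinom := choose_two_succ_add_choose_two (2 * r)
  zify at hcard hbinom
  have hm' : (q : ℤ) = 2 * r + m := by exact_mod_cast hm
  rw [hm']
  linarith
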